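/- There exists ε₀ > 0 such that for all 0 < ε ≤ ε₀, every λ ∈ ℝ, and every solution u of the Sturm–Liouville equation −(p(x)u'(x))' = λ·w(x)·u(x) on (x₀, 1−x₀): the limits lim_{x→x₀⁺} p(x)u'(x) and lim_{x→(1−x₀)⁻} p(x)u'(x) are both zero if and only if u extends to a function in C²([0,1]) satisfying φ₂(x)u''(x) + φ₁(x)u'(x) = λu(x) for all x ∈ [0,1]. In particular, the set of C²([0,1]) solutions of D_ε u = λu coincides with the set of solutions satisfying the quasi-Neumann condition lim_{x→y} p(x)u'(x) = 0 at both points y ∈ {x₀, 1−x₀}. -/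

import Mathlib

open Real Set Filter Topology MeasureTheory

/-- The degenerate point `x₀ = (2 − √3)ε`. -/
noncomputable def x0 (ε : ℝ) : ℝ := (2 - Real.sqrt 3) * ε

/-- Leading coefficient `φ₂` of `D_ε` on the interval. -/
noncomputable def phi2 (ε x : ℝ) : ℝ :=
  if x ≤ ε then (1/12) * (1 - 4*(x/ε) + (x/ε)^2)
  else if x ≤ 1 - ε then -(1/6)
  else (1/12) * (1 - 4*((1-x)/ε) + ((1-x)/ε)^2)

/-- First-order coefficient `φ₁` of `D_ε` on the interval. -/
noncomputable def phi1 (ε x : ℝ) : ℝ :=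
  if x ≤ ε then -6 * (1 - x/ε) * ((1 + x/ε)^3)⁻¹
  else if x ≤ 1 - ε then 0
  else 6 * (1 - (1-x)/ε) * ((1 + (1-x)/ε)^3)⁻¹

/-- Integration-factor function `g` on `[0, ε]`. -/
noncomputable def gfun (ε x : ℝ) : ℝ :=
  Real.sign (x - x0 ε) * |x - x0 ε| ^ ((4 + 2*Real.sqrt 3) * ε) *
    |x - 4*ε + x0 ε| ^ ((4 - 2*Real.sqrt 3) * ε) *
    (x + ε) ^ (-(8*ε)) *
    Real.exp (12*ε^3/(ε+x)^2 + 12*ε^2/(ε+x))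

/-- Sturm–Liouville principal coefficient `p`. -/
noncomputable def pfun (ε x : ℝ) : ℝ :=
  if x ≤ ε then gfun ε x / (6 * gfun ε ε)
  else if x ≤ 1 - ε then 1/6
  else gfun ε (1-x) / (6 * gfun ε ε)

/-- Sturm–Liouville weight `w = -p/φ₂`. -/
noncomputable def wfun (ε x : ℝ) : ℝ := -pfun ε x / phi2 ε x

/-- `u` (with derivative `u'`) solves the Sturm–Liouville equation
`−(p u')' = λ w u` on `(x₀, 1−x₀)`. -/
def IsSLSol (ε lam : ℝ) (u u' : ℝ → ℝ) : Prop :=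
  ∀ x ∈ Ioo (x0 ε) (1 - x0 ε), HasDerivAt u (u' x) x ∧
    HasDerivAt (fun y => pfun ε y * u' y) (-(lam * wfun ε x * u x)) x

/-!
Under `x = x₀ + ε s` the equation `D_ε y = λ y` becomes `s Y'' + q(s) Y' = ρ(s) Y` with `q` and `ρ`
analytic in the unit disc and `q(0) = (4 + 2√3) ε > 0`. The Frobenius recursion therefore never
divides by zero and gives a solution `y` that is regular at `x₀` with `y(x₀) = 1`.

Let `u` solve the Sturm–Liouville equation with `p u' → 0` at `x₀`. Since `p` increases from `0`,
also `p u → 0`, so the constant `p (u' y - u y')` vanishes. Hence `u` is a multiple of `y` near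
`x₀`, and this multiple extends `u` to the left of `x₀`. The symmetry `x ↦ 1 - x` treats the other
end point. Conversely, `p u' → 0` at both points as soon as `u'` stays bounded, because `p` vanishes
there.
-/

section PowerSeries

open PowerSeries

variable {𝕜 : Type*} [RCLike 𝕜] {f g : 𝕜⟦X⟧} {r t : ℝ} {s : 𝕜}

/-- The formal power series `f` converges absolutely on the open disc of radius `r` about `0`. -/
def ConvergesOnDisc (f : 𝕜⟦X⟧) (r : ℝ) : Prop :=
  ∀ s : 𝕜, ‖s‖ < r → Summable fun n => ‖coeff n f * s ^ n‖

/-- The sum of the formal power series `f` at the point `s`, with the junk value `0` where the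
series does not converge. -/
noncomputable def sumAt (f : 𝕜⟦X⟧) (s : 𝕜) : 𝕜 :=
  ∑' n, coeff n f * s ^ n

/-- The geometric series `∑ aⁿ Xⁿ`, which expands `(1 - a X)⁻¹`. -/
def geomSeries (a : 𝕜) : 𝕜⟦X⟧ :=
  mk fun n => a ^ n

lemma sumAt_zero : sumAt f 0 = constantCoeff f := by
  rw [sumAt, tsum_eq_single 0 fun n hn => by rw [zero_pow hn, mul_zero], pow_zero, mul_one,
    coeff_zero_eq_constantCoeff_apply]

lemma sumAt_C (a : 𝕜) : sumAt (C a) s = a := by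
  rw [sumAt, tsum_eq_single 0 fun n hn => by rw [coeff_C, if_neg hn, zero_mul], coeff_zero_C,
    pow_zero, mul_one]

lemma sumAt_X : sumAt X s = s := by
  rw [sumAt, tsum_eq_single 1 fun n hn => by rw [coeff_X, if_neg hn, zero_mul], coeff_one_X,
    pow_one, one_mul]

lemma sumAt_geomSeries {a : 𝕜} (h : ‖a * s‖ < 1) :
    sumAt (geomSeries a) s = (1 - a * s)⁻¹ := by
  simp only [sumAt, geomSeries, coeff_mk, ← mul_pow]
  exact tsum_geometric_of_norm_lt_one h

lemma sumAt_geomSeries_inv {c : 𝕜} (hs : ‖s‖ < ‖c‖) :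
    sumAt (geomSeries c⁻¹) s = c / (c - s) := by
  have hc : 0 < ‖c‖ := (norm_nonneg s).trans_lt hs
  have hratio : ‖c⁻¹ * s‖ < 1 := by
    rwa [norm_mul, norm_inv, inv_mul_eq_div, div_lt_one hc]
  have hc₀ : c ≠ 0 := norm_pos_iff.1 hc
  rw [sumAt_geomSeries hratio, ← inv_div, sub_div, div_self hc₀, inv_mul_eq_div]

lemma coeff_mul_mul_pow (f g : 𝕜⟦X⟧) (s : 𝕜) (n : ℕ) : coeff n (f * g) * s ^ n =
    ∑ kl ∈ Finset.HasAntidiagonal.antidiagonal n,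
      coeff kl.1 f * s ^ kl.1 * (coeff kl.2 g * s ^ kl.2) := by
  rw [coeff_mul, Finset.sum_mul]
  refine Finset.sum_congr rfl fun kl hkl => ?_
  rw [← Finset.HasAntidiagonal.mem_antidiagonal.1 hkl, pow_add]
  ring

namespace ConvergesOnDisc

lemma summable_norm_coeff_mul_pow (hf : ConvergesOnDisc f r) (ht₀ : 0 ≤ t) (ht : t < r) :
    Summable fun n => ‖coeff n f‖ * t ^ n := by
  have hnorm : ‖(t : 𝕜)‖ = t := RCLike.norm_of_nonneg ht₀
  simpa only [norm_mul, norm_pow, hnorm] using hf t (hnorm.trans_lt ht)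

lemma of_bounded (h : ∀ t, 0 < t → t < r → ∃ M, ∀ n, ‖coeff n f‖ * t ^ n ≤ M) :
    ConvergesOnDisc f r := by
  intro s hs
  obtain ⟨t, hst, htr⟩ := exists_between hs
  have ht : 0 < t := (norm_nonneg s).trans_lt hst
  obtain ⟨M, hM⟩ := h t ht htr
  have hgeom : Summable fun n : ℕ => M * (‖s‖ / t) ^ n :=
    (summable_geometric_of_lt_one (by positivity) ((div_lt_one ht).2 hst)).mul_left M
  refine hgeom.of_nonneg_of_le (fun n => norm_nonneg _) fun n => ?_
  calc ‖coeff n f * s ^ n‖ = ‖coeff n f‖ * t ^ n * (‖s‖ / t) ^ n := by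
        rw [norm_mul, norm_pow, div_pow]; field_simp
    _ ≤ M * (‖s‖ / t) ^ n := by gcongr; exact hM n

lemma C (a : 𝕜) (r : ℝ) : ConvergesOnDisc (PowerSeries.C a) r := fun s _ =>
  summable_of_ne_finset_zero (s := {0}) fun n hn => by
    rw [coeff_C, if_neg (by simpa using hn), zero_mul, norm_zero]

lemma X (r : ℝ) : ConvergesOnDisc (PowerSeries.X : 𝕜⟦X⟧) r := fun s _ =>
  summable_of_ne_finset_zero (s := {1}) fun n hn => by
    rw [coeff_X, if_neg (by simpa using hn), zero_mul, norm_zero]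

lemma add (hf : ConvergesOnDisc f r) (hg : ConvergesOnDisc g r) : ConvergesOnDisc (f + g) r :=
  fun s hs => ((hf s hs).add (hg s hs)).of_nonneg_of_le (fun _ => norm_nonneg _) fun n => by
    rw [map_add, add_mul]; exact norm_add_le _ _

lemma mul (hf : ConvergesOnDisc f r) (hg : ConvergesOnDisc g r) : ConvergesOnDisc (f * g) r :=
  fun s hs => by
    simpa only [coeff_mul_mul_pow] using
      summable_norm_sum_mul_antidiagonal_of_summable_norm (hf s hs) (hg s hs)

lemma geomSeries {a : 𝕜} (ha : ‖a‖ * r ≤ 1) : ConvergesOnDisc (_root_.geomSeries a) r :=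
  of_bounded fun t ht htr => ⟨1, fun n => by
    rw [_root_.geomSeries, coeff_mk, norm_pow, ← mul_pow]
    exact pow_le_one₀ (by positivity) ((by gcongr : ‖a‖ * t ≤ ‖a‖ * r).trans ha)⟩

lemma geomSeries_inv {c : 𝕜} (hc : r ≤ ‖c‖) : ConvergesOnDisc (_root_.geomSeries c⁻¹) r :=
  .geomSeries (by
    rw [norm_inv]
    exact (mul_le_mul_of_nonneg_left hc (by positivity)).trans inv_mul_le_one)

lemma pow (hf : ConvergesOnDisc f r) (n : ℕ) : ConvergesOnDisc (f ^ n) r := by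
  induction n with
  | zero => rw [pow_zero, ← map_one PowerSeries.C]; exact C 1 r
  | succ n ih => rw [pow_succ]; exact ih.mul hf

lemma C_add_C_mul_X (a b : 𝕜) (r : ℝ) :
    ConvergesOnDisc (PowerSeries.C a + PowerSeries.C b * PowerSeries.X) r :=
  (C a r).add ((C b r).mul (X r))

lemma sumAt_add (hf : ConvergesOnDisc f r) (hg : ConvergesOnDisc g r) (hs : ‖s‖ < r) :
    sumAt (f + g) s = sumAt f s + sumAt g s := by
  simp only [sumAt, map_add, add_mul]
  exact (hf s hs).of_norm.tsum_add (hg s hs).of_norm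

lemma sumAt_mul (hf : ConvergesOnDisc f r) (hg : ConvergesOnDisc g r) (hs : ‖s‖ < r) :
    sumAt (f * g) s = sumAt f s * sumAt g s := by
  simp only [sumAt, coeff_mul_mul_pow]
  exact (tsum_mul_tsum_eq_tsum_sum_antidiagonal_of_summable_norm (hf s hs) (hg s hs)).symm

lemma sumAt_pow (hf : ConvergesOnDisc f r) (hs : ‖s‖ < r) (n : ℕ) :
    sumAt (f ^ n) s = sumAt f s ^ n := by
  induction n with
  | zero => rw [pow_zero, pow_zero, ← map_one PowerSeries.C, sumAt_C]
  | succ n ih => rw [pow_succ, (hf.pow n).sumAt_mul hf hs, ih, pow_succ]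

lemma summable_norm_coeff_derivative (hf : ConvergesOnDisc f r) (ht₀ : 0 ≤ t) (ht : t < r) :
    Summable fun n : ℕ => ‖coeff (n + 1) f‖ * (n + 1) * t ^ n := by
  obtain ⟨k, htk, hkr⟩ := exists_between ht
  have hk : 0 < k := ht₀.trans_lt htk
  obtain ⟨M, hM⟩ :=
    (hf.summable_norm_coeff_mul_pow hk.le hkr).tendsto_atTop_zero.bddAbove_range
  have hratio : ‖t / k‖ < 1 := by
    rw [Real.norm_of_nonneg (by positivity)]; exact (div_lt_one hk).2 htk
  have hmajorant : Summable fun n : ℕ => M / k * ((n + 1) * (t / k) ^ n) := by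
    simpa only [pow_one, pow_zero, one_mul, add_mul] using
      ((summable_pow_mul_geometric_of_norm_lt_one 1 hratio).add
        (summable_pow_mul_geometric_of_norm_lt_one 0 hratio)).mul_left (M / k)
  refine hmajorant.of_nonneg_of_le (fun n => by positivity) fun n => ?_
  calc ‖coeff (n + 1) f‖ * (n + 1) * t ^ n
      = ‖coeff (n + 1) f‖ * k ^ (n + 1) / k * ((n + 1) * (t / k) ^ n) := by
        rw [div_pow, pow_succ]; field_simp
    _ ≤ M / k * ((n + 1) * (t / k) ^ n) := by gcongr; exact hM ⟨n + 1, rfl⟩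

lemma derivative (hf : ConvergesOnDisc f r) : ConvergesOnDisc (d⁄dX 𝕜 f) r := fun s hs => by
  refine (hf.summable_norm_coeff_derivative (norm_nonneg s) hs).congr fun n => ?_
  rw [coeff_derivative, norm_mul, norm_mul, norm_pow]
  norm_cast

lemma hasDerivAt_sumAt (hf : ConvergesOnDisc f r) (hs : ‖s‖ < r) :
    HasDerivAt (sumAt f) (sumAt (d⁄dX 𝕜 f) s) s := by
  obtain ⟨t, hst, htr⟩ := exists_between hs
  have ht : 0 < t := (norm_nonneg s).trans_lt hst
  have hbound : Summable fun n : ℕ => ‖coeff n f‖ * (n * t ^ (n - 1)) := by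
    rw [← summable_nat_add_iff 1]
    exact (hf.summable_norm_coeff_derivative ht.le htr).congr fun n => by
      rw [Nat.add_sub_cancel, Nat.cast_succ, mul_assoc]
  have hle (n : ℕ) (z : 𝕜) (hz : z ∈ Metric.ball (0 : 𝕜) t) :
      ‖coeff n f * (n * z ^ (n - 1))‖ ≤ ‖coeff n f‖ * (n * t ^ (n - 1)) := by
    rw [norm_mul, norm_mul, norm_pow, RCLike.norm_natCast]
    gcongr
    exact (mem_ball_zero_iff.1 hz).le
  have hmem : s ∈ Metric.ball (0 : 𝕜) t := mem_ball_zero_iff.2 hst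
  have hderiv : HasDerivAt (sumAt f) (∑' n : ℕ, coeff n f * (n * s ^ (n - 1))) s :=
    hasDerivAt_tsum_of_isPreconnected hbound Metric.isOpen_ball
      (convex_ball (0 : 𝕜) t).isPreconnected
      (fun n z _ => (hasDerivAt_pow n z).const_mul _) hle hmem (hf s hs).of_norm hmem
  convert hderiv using 1
  rw [(Summable.of_norm_bounded hbound fun n => hle n s hmem).tsum_eq_zero_add]
  simp only [Nat.cast_zero, zero_mul, mul_zero, zero_add, Nat.add_sub_cancel, sumAt]
  exact tsum_congr fun n => by rw [coeff_derivative, Nat.cast_succ, mul_assoc]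

end ConvergesOnDisc

lemma sumAt_C_add_C_mul_X (a b : 𝕜) : sumAt (C a + C b * X) s = a + b * s := by
  have hs : ‖s‖ < ‖s‖ + 1 := lt_add_one _
  have hC (c : 𝕜) := ConvergesOnDisc.C c (‖s‖ + 1)
  have hX := ConvergesOnDisc.X (𝕜 := 𝕜) (‖s‖ + 1)
  rw [(hC a).sumAt_add ((hC b).mul hX) hs, (hC b).sumAt_mul hX hs, sumAt_C, sumAt_C, sumAt_X]

end PowerSeries

section Frobenius

open PowerSeries

/-- The coefficients of the formal power series solution `Y` of the differential equation
`s Y'' + q(s) Y' = ρ(s) Y` with `Y(0) = 1`, given by the recursion of the Frobenius method. -/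
noncomputable def frobeniusCoeff {K : Type*} [Field K] (q ρ : K⟦X⟧) : ℕ → K
  | 0 => 1
  | n + 1 => (∑ j : Fin (n + 1), (coeff (n - j) ρ - j * coeff (n + 1 - j) q) *
      frobeniusCoeff q ρ j) / ((n + 1) * (n + constantCoeff q))

/-- The formal power series solution `Y` of `s Y'' + q(s) Y' = ρ(s) Y` with `Y(0) = 1`. -/
noncomputable def frobeniusSeries {K : Type*} [Field K] (q ρ : K⟦X⟧) : K⟦X⟧ :=
  mk (frobeniusCoeff q ρ)

section Formal

variable {K : Type*} [Field K] {q ρ : K⟦X⟧}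

lemma frobeniusCoeff_succ (n : ℕ) : frobeniusCoeff q ρ (n + 1) =
    (∑ j ∈ Finset.range (n + 1), (coeff (n - j) ρ - j * coeff (n + 1 - j) q) *
      frobeniusCoeff q ρ j) / ((n + 1) * (n + constantCoeff q)) := by
  rw [frobeniusCoeff, Finset.sum_range]

lemma constantCoeff_frobeniusSeries : constantCoeff (frobeniusSeries q ρ) = 1 := by
  rw [← coeff_zero_eq_constantCoeff_apply, frobeniusSeries, coeff_mk, frobeniusCoeff]

lemma coeff_X_mul_derivative (f : K⟦X⟧) (n : ℕ) : coeff n (X * d⁄dX K f) = n * coeff n f := by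
  cases n with
  | zero => rw [coeff_zero_X_mul, Nat.cast_zero, zero_mul]
  | succ n => rw [coeff_succ_X_mul, coeff_derivative, Nat.cast_succ, mul_comm]

lemma coeff_mul_derivative (q f : K⟦X⟧) (n : ℕ) : coeff n (q * d⁄dX K f) =
    ∑ j ∈ Finset.range (n + 1), j * coeff (n + 1 - j) q * coeff j f +
      (n + 1) * constantCoeff q * coeff (n + 1) f := by
  rw [← coeff_succ_X_mul, show X * (q * d⁄dX K f) = X * d⁄dX K f * q by ring, coeff_mul,
    Finset.Nat.sum_antidiagonal_eq_sum_range_succ fun i j =>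
      coeff i (X * d⁄dX K f) * coeff j q, Finset.sum_range_succ]
  simp only [coeff_X_mul_derivative, Nat.sub_self, coeff_zero_eq_constantCoeff, Nat.cast_succ,
    mul_right_comm]

lemma frobeniusSeries_ode [CharZero K] (hq : ∀ n : ℕ, n + constantCoeff q ≠ 0) :
    X * d⁄dX K (d⁄dX K (frobeniusSeries q ρ)) + q * d⁄dX K (frobeniusSeries q ρ) =
      ρ * frobeniusSeries q ρ := by
  ext n
  have hn : ((n : K) + 1) * (n + constantCoeff q) ≠ 0 :=
    mul_ne_zero n.cast_add_one_ne_zero (hq n)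
  have hrec := (eq_div_iff hn).1 (frobeniusCoeff_succ (q := q) (ρ := ρ) n)
  simp only [sub_mul, Finset.sum_sub_distrib] at hrec
  rw [map_add, coeff_X_mul_derivative, coeff_derivative, coeff_mul_derivative,
    mul_comm ρ, coeff_mul, Finset.Nat.sum_antidiagonal_eq_sum_range_succ fun i j =>
      coeff i (frobeniusSeries q ρ) * coeff j ρ]
  simp only [frobeniusSeries, coeff_mk, mul_comm (frobeniusCoeff q ρ _) (coeff _ ρ)]
  linear_combination hrec

end Formal

lemma exists_forall_le_of_forall_le_succ {α : Type*} [LinearOrder α] [Nonempty α]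
    {a : ℕ → α} (N : ℕ) (h : ∀ n ≥ N, ∀ M, (∀ j ≤ n, a j ≤ M) → a (n + 1) ≤ M) :
    ∃ M, ∀ n, a n ≤ M := by
  obtain ⟨M, hM⟩ := ((Finset.range (N + 1)).image a).exists_le
  refine ⟨M, fun n => n.strong_induction_on fun n ih => ?_⟩
  rcases le_or_gt n N with hn | hn
  · exact hM _ (Finset.mem_image_of_mem a (Finset.mem_range_succ_iff.2 hn))
  · obtain ⟨n, rfl⟩ := Nat.exists_eq_succ_of_ne_zero (Nat.ne_zero_of_lt hn)
    exact h n (Nat.lt_succ_iff.1 hn) M fun j hj => ih j (Nat.lt_succ_of_le hj)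

lemma sum_range_sub_le_tsum {f : ℕ → ℝ} (hf : Summable f) (hf₀ : ∀ i, 0 ≤ f i) {m n : ℕ}
    (hmn : m ≤ n + 1) : ∑ j ∈ Finset.range m, f (n - j) ≤ ∑' i, f i := by
  have hinj : InjOn (n - ·) (Finset.range m : Set ℕ) := fun i hi j hj hij => by
    simp only [Finset.coe_range, mem_Iio] at hi hj hij; omega
  rw [← Finset.sum_image (f := f) hinj]
  exact hf.sum_le_tsum _ fun i _ => hf₀ i

variable {𝕜 : Type*} [RCLike 𝕜] {q ρ : 𝕜⟦X⟧} {r t : ℝ} {s : 𝕜}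

lemma norm_frobenius_term_le (ht : 0 ≤ t) {c : 𝕜} {j n : ℕ} {M : ℝ} (hj : j ≤ n)
    (hc : ‖c‖ * t ^ j ≤ M) :
    ‖(coeff (n - j) ρ - j * coeff (n + 1 - j) q) * c‖ * t ^ (n + 1) ≤
      (t * (‖coeff (n - j) ρ‖ * t ^ (n - j)) +
        n * (‖coeff (n + 1 - j) q‖ * t ^ (n + 1 - j))) * M := by
  have hnorm : ‖coeff (n - j) ρ - j * coeff (n + 1 - j) q‖ ≤
      ‖coeff (n - j) ρ‖ + n * ‖coeff (n + 1 - j) q‖ := by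
    refine (norm_sub_le _ _).trans ?_
    rw [norm_mul, RCLike.norm_natCast]
    gcongr
  calc ‖(coeff (n - j) ρ - j * coeff (n + 1 - j) q) * c‖ * t ^ (n + 1)
      = ‖coeff (n - j) ρ - j * coeff (n + 1 - j) q‖ * t ^ (n + 1 - j) * (‖c‖ * t ^ j) := by
        rw [norm_mul, ← pow_sub_mul_pow t (hj.trans n.le_succ)]; ring
    _ ≤ (‖coeff (n - j) ρ‖ + n * ‖coeff (n + 1 - j) q‖) * t ^ (n + 1 - j) * M := by gcongr
    _ = _ := by rw [Nat.succ_sub hj, pow_succ]; ring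

lemma norm_frobenius_sum_le (hq : Summable fun n => ‖coeff n q‖ * t ^ n)
    (hρ : Summable fun n => ‖coeff n ρ‖ * t ^ n) (ht : 0 ≤ t) {c : ℕ → 𝕜} {n : ℕ} {M : ℝ}
    (hc : ∀ j ≤ n, ‖c j‖ * t ^ j ≤ M) :
    ‖∑ j ∈ Finset.range (n + 1), (coeff (n - j) ρ - j * coeff (n + 1 - j) q) * c j‖ *
      t ^ (n + 1) ≤
    (t * ∑' i, ‖coeff i ρ‖ * t ^ i + n * ∑' i, ‖coeff i q‖ * t ^ i) * M := by
  have hM : 0 ≤ M := le_trans (by positivity) (hc 0 n.zero_le)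
  calc _ ≤ ∑ j ∈ Finset.range (n + 1),
        ‖(coeff (n - j) ρ - j * coeff (n + 1 - j) q) * c j‖ * t ^ (n + 1) := by
        rw [← Finset.sum_mul]; gcongr; exact norm_sum_le _ _
    _ ≤ ∑ j ∈ Finset.range (n + 1), (t * (‖coeff (n - j) ρ‖ * t ^ (n - j)) +
          n * (‖coeff (n + 1 - j) q‖ * t ^ (n + 1 - j))) * M :=
        Finset.sum_le_sum fun j hj =>
          have hjn := Finset.mem_range_succ_iff.1 hj
          norm_frobenius_term_le ht hjn (hc j hjn)
    _ ≤ _ := by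
        rw [← Finset.sum_mul, Finset.sum_add_distrib, ← Finset.mul_sum, ← Finset.mul_sum]
        gcongr
        · exact sum_range_sub_le_tsum hρ (fun i => by positivity) le_rfl
        · exact sum_range_sub_le_tsum hq (fun i => by positivity) (n + 1).le_succ

lemma ConvergesOnDisc.frobeniusSeries (hq : ConvergesOnDisc q r) (hρ : ConvergesOnDisc ρ r) :
    ConvergesOnDisc (frobeniusSeries q ρ) r := by
  refine of_bounded fun t ht htr => ?_
  have hqt := hq.summable_norm_coeff_mul_pow ht.le htr
  have hρt := hρ.summable_norm_coeff_mul_pow ht.le htr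
  set A := ∑' i, ‖coeff i q‖ * t ^ i
  set B := ∑' i, ‖coeff i ρ‖ * t ^ i
  have hA : 0 ≤ A := tsum_nonneg fun i => by positivity
  have hB : 0 ≤ B := tsum_nonneg fun i => by positivity
  obtain ⟨N, hN⟩ := exists_nat_gt (‖constantCoeff q‖ + A + t * B)
  refine exists_forall_le_of_forall_le_succ N fun n hn M hM => ?_
  simp only [_root_.frobeniusSeries, coeff_mk] at hM ⊢
  have hM₀ : 0 ≤ M := le_trans (by positivity) (hM 0 n.zero_le)
  have hnN : (N : ℝ) ≤ n := Nat.cast_le.2 hn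
  have hsum := norm_frobenius_sum_le hqt hρt ht.le hM
  have hden : A + t * B < ‖(n : 𝕜) + constantCoeff q‖ := by
    have htri := norm_sub_le_norm_add (n : 𝕜) (constantCoeff q)
    rw [RCLike.norm_natCast] at htri
    linarith
  have hden₀ : 0 < ‖(n : 𝕜) + constantCoeff q‖ := by linarith [mul_nonneg ht.le hB]
  have hnorm : ‖(n : 𝕜) + 1‖ = n + 1 := by norm_cast
  rw [frobeniusCoeff_succ, norm_div, norm_mul, hnorm, div_mul_eq_mul_div,
    div_le_iff₀ (by positivity)]
  calc _ ≤ (t * B + n * A) * M := hsum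
    _ ≤ (n + 1) * (A + t * B) * M := by
        gcongr; nlinarith [mul_nonneg ht.le hB, mul_nonneg n.cast_nonneg (mul_nonneg ht.le hB)]
    _ ≤ (n + 1) * ‖(n : 𝕜) + constantCoeff q‖ * M := by gcongr
    _ = _ := mul_comm _ _

lemma sumAt_frobeniusSeries_ode (hq : ConvergesOnDisc q r) (hρ : ConvergesOnDisc ρ r)
    (hq₀ : ∀ n : ℕ, n + constantCoeff q ≠ 0) (hs : ‖s‖ < r) :
    s * sumAt (d⁄dX 𝕜 (d⁄dX 𝕜 (frobeniusSeries q ρ))) s +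
        sumAt q s * sumAt (d⁄dX 𝕜 (frobeniusSeries q ρ)) s =
      sumAt ρ s * sumAt (frobeniusSeries q ρ) s := by
  have hY := hq.frobeniusSeries hρ
  have hX := ConvergesOnDisc.X (𝕜 := 𝕜) r
  rw [← hρ.sumAt_mul hY hs, ← frobeniusSeries_ode hq₀,
    (hX.mul hY.derivative.derivative).sumAt_add (hq.mul hY.derivative) hs,
    hX.sumAt_mul hY.derivative.derivative hs, hq.sumAt_mul hY.derivative hs, sumAt_X]

lemma exists_hasDerivAt_of_regular_singular (hq : ConvergesOnDisc q r) (hρ : ConvergesOnDisc ρ r)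
    (hq₀ : ∀ n : ℕ, n + constantCoeff q ≠ 0) : ∃ Y Y' Y'' : 𝕜 → 𝕜, Y 0 = 1 ∧
      ∀ s, ‖s‖ < r → HasDerivAt Y (Y' s) s ∧ HasDerivAt Y' (Y'' s) s ∧ ContinuousAt Y'' s ∧
        s * Y'' s + sumAt q s * Y' s = sumAt ρ s * Y s := by
  have hY := hq.frobeniusSeries hρ
  refine ⟨sumAt (frobeniusSeries q ρ), sumAt (d⁄dX 𝕜 (frobeniusSeries q ρ)),
    sumAt (d⁄dX 𝕜 (d⁄dX 𝕜 (frobeniusSeries q ρ))), ?_, fun s hs => ?_⟩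
  · rw [sumAt_zero, constantCoeff_frobeniusSeries]
  · exact ⟨hY.hasDerivAt_sumAt hs, hY.derivative.hasDerivAt_sumAt hs,
      (hY.derivative.derivative.hasDerivAt_sumAt hs).continuousAt,
      sumAt_frobeniusSeries_ode hq hρ hq₀ hs⟩

end Frobenius

section SturmLiouville

variable {a b p f u u' y : ℝ → ℝ} {c l m x lam : ℝ}

/-- The second-order differential operator `f ↦ a f'' + b f'`. -/
noncomputable def diffOp (a b f : ℝ → ℝ) (x : ℝ) : ℝ :=
  a x * deriv (deriv f) x + b x * deriv f x

/-- Near `x` the function `f` is twice continuously differentiable, and at `x` itself it satisfies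
the eigenvalue equation `a f'' + b f' = lam f`. -/
def IsEigenAt (a b : ℝ → ℝ) (lam : ℝ) (f : ℝ → ℝ) (x : ℝ) : Prop :=
  ContDiffAt ℝ 2 f x ∧ diffOp a b f x = lam * f x

/-- The function `p` satisfies `p' = p b / a` at `x`, so that multiplication by `p / a` puts
`a f'' + b f'` into the divergence form `(p f')'` there. -/
def IsIntegratingFactorAt (p a b : ℝ → ℝ) (x : ℝ) : Prop :=
  p x ≠ 0 ∧ a x ≠ 0 ∧ HasDerivAt p (p x * b x / a x) x

/-- The function `u`, with derivative `u'`, satisfies the Sturm–Liouville equation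
`-(p u')' = lam w u` of weight `w = -p / a` at `x`. -/
def IsSturmLiouvilleAt (p a : ℝ → ℝ) (lam : ℝ) (u u' : ℝ → ℝ) (x : ℝ) : Prop :=
  HasDerivAt u (u' x) x ∧ HasDerivAt (fun z => p z * u' z) (-(lam * (-p x / a x) * u x)) x

lemma contDiffOn_two_of_hasDerivAt {U : Set ℝ} (hU : IsOpen U) {f' f'' : ℝ → ℝ}
    (hf : ∀ x ∈ U, HasDerivAt f (f' x) x) (hf' : ∀ x ∈ U, HasDerivAt f' (f'' x) x)
    (hf'' : ContinuousOn f'' U) : ContDiffOn ℝ 2 f U := by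
  have hC1 : ContDiffOn ℝ 1 f' U := by
    refine (contDiffOn_succ_iff_deriv_of_isOpen (n := 0) hU).2 ⟨?_, by simp, ?_⟩
    · exact fun x hx => (hf' x hx).differentiableAt.differentiableWithinAt
    · exact contDiffOn_zero.2 (hf''.congr fun x hx => (hf' x hx).deriv)
  refine (contDiffOn_succ_iff_deriv_of_isOpen (n := 1) hU).2 ⟨?_, by simp, ?_⟩
  · exact fun x hx => (hf x hx).differentiableAt.differentiableWithinAt
  · exact hC1.congr fun x hx => (hf x hx).deriv

lemma isEigenAt_of_hasDerivAt {U : Set ℝ} (hU : IsOpen U) {f' f'' : ℝ → ℝ}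
    (hf : ∀ x ∈ U, HasDerivAt f (f' x) x) (hf' : ∀ x ∈ U, HasDerivAt f' (f'' x) x)
    (hf'' : ContinuousOn f'' U) (hx : x ∈ U) (hode : a x * f'' x + b x * f' x = lam * f x) :
    IsEigenAt a b lam f x := by
  have hderiv : deriv f =ᶠ[𝓝 x] f' := eventually_of_mem (hU.mem_nhds hx) fun z hz => (hf z hz).deriv
  refine ⟨(contDiffOn_two_of_hasDerivAt hU hf hf' hf'').contDiffAt (hU.mem_nhds hx), ?_⟩
  rw [diffOp, hderiv.deriv_eq, (hf' x hx).deriv, hderiv.eq_of_nhds, hode]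

lemma IsIntegratingFactorAt.comp_const_sub (hpc : ∀ x, p (c - x) = p x)
    (ha : ∀ x, a (c - x) = a x) (hb : ∀ x, b (c - x) = -b x)
    (hp : IsIntegratingFactorAt p a b (c - x)) : IsIntegratingFactorAt p a b x := by
  rw [IsIntegratingFactorAt, hpc, ha, hb] at hp
  refine ⟨hp.1, hp.2.1, ?_⟩
  have hderiv := hp.2.2.comp_const_sub c x
  simp only [hpc] at hderiv
  exact hderiv.congr_deriv (by ring)

namespace IsEigenAt

lemma congr {g : ℝ → ℝ} (hf : IsEigenAt a b lam f x) (hfg : g =ᶠ[𝓝 x] f) :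
    IsEigenAt a b lam g x :=
  ⟨hf.1.congr_of_eventuallyEq hfg, by
    rw [diffOp, hfg.deriv.deriv_eq, hfg.deriv_eq, hfg.eq_of_nhds]; exact hf.2⟩

lemma const_mul (hf : IsEigenAt a b lam f x) (k : ℝ) :
    IsEigenAt a b lam (fun z => k * f z) x := by
  refine ⟨contDiffAt_const.mul hf.1, ?_⟩
  have hode := hf.2
  simp only [diffOp, deriv_const_mul_field'] at hode ⊢
  linear_combination k * hode

lemma comp_const_sub (ha : ∀ x, a (c - x) = a x) (hb : ∀ x, b (c - x) = -b x)
    (hf : IsEigenAt a b lam f (c - x)) : IsEigenAt a b lam (fun z => f (c - z)) x := by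
  refine ⟨hf.1.comp x (contDiffAt_const.sub contDiffAt_id), ?_⟩
  have hderiv : deriv (fun z => f (c - z)) = fun z => -deriv f (c - z) :=
    funext fun z => deriv_comp_const_sub ..
  have hode := hf.2
  rw [diffOp, ha, hb] at hode
  rw [diffOp, hderiv, deriv.fun_neg, deriv_comp_const_sub]
  linear_combination hode

lemma contDiffAt_deriv (hf : IsEigenAt a b lam f x) : ContDiffAt ℝ 1 (deriv f) x :=
  hf.1.derivWithin (by norm_num)

lemma hasDerivAt (hf : IsEigenAt a b lam f x) : HasDerivAt f (deriv f x) x :=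
  (hf.1.differentiableAt (by norm_num)).hasDerivAt

lemma hasDerivAt_deriv (hf : IsEigenAt a b lam f x) :
    HasDerivAt (deriv f) (deriv (deriv f) x) x :=
  (hf.contDiffAt_deriv.differentiableAt one_ne_zero).hasDerivAt

lemma continuousAt_deriv_deriv (hf : IsEigenAt a b lam f x) :
    ContinuousAt (deriv (deriv f)) x :=
  (hf.contDiffAt_deriv.derivWithin (m := 0) (by norm_num)).continuousAt

lemma isSturmLiouvilleAt (hf : IsEigenAt a b lam f x) (hp : IsIntegratingFactorAt p a b x) :
    IsSturmLiouvilleAt p a lam f (deriv f) x := by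
  have ha := hp.2.1
  have hode := hf.2
  rw [diffOp] at hode
  refine ⟨hf.hasDerivAt, (hp.2.2.fun_mul hf.hasDerivAt_deriv).congr_deriv ?_⟩
  field_simp
  linear_combination p x * hode

end IsEigenAt

lemma IsSturmLiouvilleAt.hasDerivAt_deriv (hu : IsSturmLiouvilleAt p a lam u u' x)
    (hp : IsIntegratingFactorAt p a b x) :
    HasDerivAt u' ((lam * u x - b x * u' x) / a x) x := by
  obtain ⟨hp₀, ha, hderiv⟩ := hp
  have hquot : (fun z => p z * u' z / p z) =ᶠ[𝓝 x] u' :=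
    (hderiv.continuousAt.eventually_ne hp₀).mono fun z hz => mul_div_cancel_left₀ _ hz
  refine ((hu.2.fun_div hderiv hp₀).congr_of_eventuallyEq hquot.symm).congr_deriv ?_
  field_simp

lemma IsSturmLiouvilleAt.isEigenAt {U : Set ℝ} (hU : IsOpen U) (ha : ContinuousOn a U)
    (hb : ContinuousOn b U) (hp : ∀ x ∈ U, IsIntegratingFactorAt p a b x)
    (hu : ∀ x ∈ U, IsSturmLiouvilleAt p a lam u u' x) (hx : x ∈ U) : IsEigenAt a b lam u x := by
  have hu' : ∀ x ∈ U, HasDerivAt u' ((lam * u x - b x * u' x) / a x) x := fun x hx =>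
    (hu x hx).hasDerivAt_deriv (hp x hx)
  have hcont : ContinuousOn (fun x => (lam * u x - b x * u' x) / a x) U :=
    ((continuousOn_const.mul (HasDerivAt.continuousOn fun x hx => (hu x hx).1)).sub
      (hb.mul (HasDerivAt.continuousOn hu'))).div ha fun x hx => (hp x hx).2.1
  refine isEigenAt_of_hasDerivAt hU (fun x hx => (hu x hx).1) hu' hcont hx ?_
  rw [mul_div_cancel₀ _ (hp x hx).2.1, sub_add_cancel]

lemma eq_of_hasDerivAt_zero_of_tendsto (hf : ∀ x ∈ Ioo l m, HasDerivAt f 0 x)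
    (hlim : Tendsto f (𝓝[>] l) (𝓝 c)) (hx : x ∈ Ioo l m) : f x = c := by
  obtain ⟨k, hk⟩ := isOpen_Ioo.exists_is_const_of_deriv_eq_zero isPreconnected_Ioo
    (fun z hz => (hf z hz).differentiableAt.differentiableWithinAt) fun z hz => (hf z hz).deriv
  have hconst : f =ᶠ[𝓝[>] l] fun _ => k :=
    eventually_of_mem (Ioo_mem_nhdsGT (hx.1.trans hx.2)) hk
  rw [hk x hx, tendsto_nhds_unique (hlim.congr' hconst) tendsto_const_nhds]

lemma mul_abs_le_add_of_monotoneOn {d C : ℝ} (hxd : x ≤ d) (hp₀ : 0 < p x)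
    (hmono : MonotoneOn p (Icc x d)) (hu : ∀ z ∈ Icc x d, HasDerivAt u (u' z) z)
    (hflux : ∀ z ∈ Icc x d, |p z * u' z| ≤ C) : p x * |u x| ≤ p x * |u d| + C * (d - x) := by
  have hderiv : ∀ z ∈ Icc x d, ‖u' z‖ ≤ C / p x := fun z hz => by
    have hle : p x ≤ p z := hmono (left_mem_Icc.2 hxd) hz hz.1
    rw [norm_eq_abs, le_div_iff₀ hp₀]
    calc |u' z| * p x ≤ |u' z| * p z := by gcongr
      _ = |p z * u' z| := by rw [abs_mul, abs_of_pos (hp₀.trans_le hle), mul_comm]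
      _ ≤ C := hflux z hz
  have hmvt : ‖u x - u d‖ ≤ C / p x * ‖x - d‖ :=
    (convex_Icc x d).norm_image_sub_le_of_norm_hasDerivWithin_le
      (fun z hz => (hu z hz).hasDerivWithinAt) hderiv (right_mem_Icc.2 hxd) (left_mem_Icc.2 hxd)
  rw [norm_eq_abs, norm_eq_abs, abs_sub_comm x d, abs_of_nonneg (sub_nonneg.2 hxd)] at hmvt
  calc p x * |u x| ≤ p x * (|u d| + C / p x * (d - x)) := by
        gcongr; linarith [abs_sub_abs_le_abs_sub (u x) (u d)]
    _ = p x * |u d| + C * (d - x) := by field_simp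

lemma tendsto_mul_zero_of_tendsto_mul_deriv_zero (hlm : l < m)
    (hp₀ : ∀ x ∈ Ioo l m, 0 < p x) (hmono : MonotoneOn p (Ioo l m))
    (hp : Tendsto p (𝓝[>] l) (𝓝 0)) (hu : ∀ x ∈ Ioo l m, HasDerivAt u (u' x) x)
    (hflux : Tendsto (fun x => p x * u' x) (𝓝[>] l) (𝓝 0)) :
    Tendsto (fun x => p x * u x) (𝓝[>] l) (𝓝 0) := by
  rw [Metric.tendsto_nhds]
  intro η hη
  have hC : 0 < η / 2 / (m - l) := div_pos (half_pos hη) (sub_pos.2 hlm)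
  set C := η / 2 / (m - l)
  obtain ⟨e, he, heC⟩ : ∃ e ∈ Ioc l m, ∀ z ∈ Ioo l e, |p z * u' z| ≤ C := by
    have hbound : ∀ᶠ z in 𝓝[>] l, |p z * u' z| ≤ C := by
      filter_upwards [Metric.tendsto_nhds.1 hflux C hC] with z hz
      exact (dist_zero_right (p z * u' z) ▸ hz).le
    exact (mem_nhdsGT_iff_exists_mem_Ioc_Ioo_subset hlm).1 hbound
  obtain ⟨d, hld, hde⟩ := exists_between he.1
  have hdm : d < m := hde.trans_le he.2
  have hsmall : ∀ᶠ x in 𝓝[>] l, p x * |u d| < η / 2 := by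
    have hlim := hp.mul_const |u d|
    rw [zero_mul] at hlim
    exact hlim.eventually_lt_const (half_pos hη)
  filter_upwards [hsmall, Ioo_mem_nhdsGT hld] with x hx hxd
  have hpx : 0 < p x := hp₀ x ⟨hxd.1, hxd.2.trans hdm⟩
  have hsub : Icc x d ⊆ Ioo l m := Icc_subset_Ioo hxd.1 hdm
  rw [dist_zero_right, norm_eq_abs, abs_mul, abs_of_pos hpx]
  calc p x * |u x| ≤ p x * |u d| + C * (d - x) :=
        mul_abs_le_add_of_monotoneOn hxd.2.le hpx (hmono.mono hsub)
          (fun z hz => hu z (hsub hz)) fun z hz => heC z (Icc_subset_Ioo hxd.1 hde hz)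
    _ ≤ p x * |u d| + C * (m - l) := by gcongr; exact hxd.1.le
    _ = p x * |u d| + η / 2 := by rw [div_mul_cancel₀ _ (sub_pos.2 hlm).ne']
    _ < η := by linarith

lemma IsSturmLiouvilleAt.hasDerivAt_wronskian {y' : ℝ → ℝ}
    (hu : IsSturmLiouvilleAt p a lam u u' x) (hy : IsSturmLiouvilleAt p a lam y y' x) :
    HasDerivAt (fun z => p z * u' z * y z - p z * u z * y' z) 0 x := by
  have h := (hu.2.mul hy.1).sub (hy.2.mul hu.1)
  refine (h.congr_of_eventuallyEq (.of_forall fun z => ?_)).congr_deriv ?_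
  · simp only [Pi.sub_apply, Pi.mul_apply]; ring
  · ring

lemma wronskian_eq_zero (hlm : l < m) (hp₀ : ∀ x ∈ Ioo l m, 0 < p x)
    (hmono : MonotoneOn p (Ioo l m)) (hp : Tendsto p (𝓝[>] l) (𝓝 0))
    (hfac : ∀ x ∈ Ioo l m, IsIntegratingFactorAt p a b x)
    (hu : ∀ x ∈ Ioo l m, IsSturmLiouvilleAt p a lam u u' x)
    (hflux : Tendsto (fun x => p x * u' x) (𝓝[>] l) (𝓝 0))
    (hy : ∀ x ∈ Ico l m, IsEigenAt a b lam y x) (hx : x ∈ Ioo l m) :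
    u' x * y x - u x * deriv y x = 0 := by
  have hyl := hy l ⟨le_rfl, hlm⟩
  have hlim := (hflux.mul (hyl.hasDerivAt.continuousAt.mono_left nhdsWithin_le_nhds)).sub
    ((tendsto_mul_zero_of_tendsto_mul_deriv_zero hlm hp₀ hmono hp (fun z hz => (hu z hz).1)
      hflux).mul (hyl.hasDerivAt_deriv.continuousAt.mono_left nhdsWithin_le_nhds))
  rw [zero_mul, zero_mul, sub_zero] at hlim
  have hzero := eq_of_hasDerivAt_zero_of_tendsto (fun z hz => (hu z hz).hasDerivAt_wronskian
    ((hy z ⟨hz.1.le, hz.2⟩).isSturmLiouvilleAt (hfac z hz))) hlim hx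
  refine (mul_eq_zero.1 ?_).resolve_left (hp₀ x hx).ne'
  linear_combination hzero

lemma exists_eqOn_const_mul_of_wronskian_eq_zero {y' : ℝ → ℝ}
    (hu : ∀ x ∈ Ioo l m, HasDerivAt u (u' x) x) (hy : ∀ x ∈ Ioo l m, HasDerivAt y (y' x) x)
    (hy₀ : ∀ x ∈ Ioo l m, y x ≠ 0) (hW : ∀ x ∈ Ioo l m, u' x * y x - u x * y' x = 0) :
    ∃ k, EqOn u (fun x => k * y x) (Ioo l m) := by
  have hquot : ∀ x ∈ Ioo l m, HasDerivAt (fun z => u z / y z) 0 x := fun x hx =>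
    ((hu x hx).fun_div (hy x hx) (hy₀ x hx)).congr_deriv (by rw [hW x hx, zero_div])
  obtain ⟨k, hk⟩ := isOpen_Ioo.exists_is_const_of_deriv_eq_zero isPreconnected_Ioo
    (fun z hz => (hquot z hz).differentiableAt.differentiableWithinAt)
    fun z hz => (hquot z hz).deriv
  exact ⟨k, fun x hx => (div_eq_iff (hy₀ x hx)).1 (hk x hx)⟩

lemma exists_eqOn_const_mul_of_tendsto_flux (hlm : l < m) (hp₀ : ∀ x ∈ Ioo l m, 0 < p x)
    (hmono : MonotoneOn p (Ioo l m)) (hp : Tendsto p (𝓝[>] l) (𝓝 0))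
    (hfac : ∀ x ∈ Ioo l m, IsIntegratingFactorAt p a b x)
    (hu : ∀ x ∈ Ioo l m, IsSturmLiouvilleAt p a lam u u' x)
    (hflux : Tendsto (fun x => p x * u' x) (𝓝[>] l) (𝓝 0))
    (hy : ∀ x ∈ Ico l m, IsEigenAt a b lam y x) (hyl : y l ≠ 0) :
    ∃ k, ∃ d ∈ Ioc l m, EqOn u (fun x => k * y x) (Ioo l d) := by
  have hne : ∀ᶠ x in 𝓝[>] l, y x ≠ 0 := nhdsWithin_le_nhds
    ((hy l ⟨le_rfl, hlm⟩).hasDerivAt.continuousAt.eventually_ne hyl)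
  obtain ⟨d, hd, hdy⟩ := (mem_nhdsGT_iff_exists_mem_Ioc_Ioo_subset hlm).1 hne
  have hsub : Ioo l d ⊆ Ioo l m := Ioo_subset_Ioo_right hd.2
  obtain ⟨k, hk⟩ := exists_eqOn_const_mul_of_wronskian_eq_zero
    (fun x hx => (hu x (hsub hx)).1)
    (fun x hx => (hy x (Ioo_subset_Ico_self (hsub hx))).hasDerivAt) hdy
    fun x hx => wronskian_eq_zero hlm hp₀ hmono hp hfac hu hflux hy (hsub hx)
  exact ⟨k, d, hd, hk⟩

lemma eqOn_of_hasDerivAt {U : Set ℝ} (hU : IsOpen U) {g f' g' : ℝ → ℝ}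
    (hf : ∀ x ∈ U, HasDerivAt f (f' x) x) (hg : ∀ x ∈ U, HasDerivAt g (g' x) x)
    (hfg : EqOn f g U) : EqOn f' g' U := fun x hx =>
  ((hf x hx).congr_of_eventuallyEq (hfg.symm.eventuallyEq_of_mem (hU.mem_nhds hx))).unique
    (hg x hx)

lemma tendsto_mul_zero_of_eqOn {F : Filter ℝ} {U : Set ℝ} {g : ℝ → ℝ} (hF : F ≤ 𝓝 x)
    (hp : Tendsto p F (𝓝 0)) (hU : U ∈ F) (hfg : EqOn f g U) (hg : ContinuousAt g x) :
    Tendsto (fun z => p z * f z) F (𝓝 0) := by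
  have hlim : Tendsto (fun z => p z * g z) F (𝓝 0) := by
    simpa only [zero_mul] using hp.mul (hg.mono_left hF)
  exact hlim.congr' (eventually_of_mem hU fun z hz => by simp only [hfg hz])

lemma tendsto_const_sub_nhdsWithin {s t : Set ℝ} (h : MapsTo (c - ·) s t) :
    Tendsto (c - ·) (𝓝[s] x) (𝓝[t] (c - x)) :=
  (continuous_const.sub continuous_id).continuousWithinAt.tendsto_nhdsWithin h

end SturmLiouville

section Coefficients

variable {ε x : ℝ}

/-- The branch of `phi2 ε` near the left end point. -/
noncomputable def phi2Left (ε x : ℝ) : ℝ := (1 / 12) * (1 - 4 * (x / ε) + (x / ε) ^ 2)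

/-- The branch of `phi1 ε` near the left end point. -/
noncomputable def phi1Left (ε x : ℝ) : ℝ := -6 * (1 - x / ε) * ((1 + x / ε) ^ 3)⁻¹

/-- The branch of `pfun ε` near the left end point. -/
noncomputable def pLeft (ε x : ℝ) : ℝ := gfun ε x / (6 * gfun ε ε)

/-- The logarithm of `gfun ε` between the two zeros of `phi2Left ε`. -/
noncomputable def gLog (ε x : ℝ) : ℝ :=
  (4 + 2 * √3) * ε * log (x - x0 ε) + (4 - 2 * √3) * ε * log (4 * ε - x0 ε - x) -
    8 * ε * log (x + ε) + (12 * ε ^ 3 / (ε+x) ^ 2 + 12 * ε ^ 2 / (ε+x))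

lemma one_lt_sqrt_three : 1 < √3 := by
  rw [lt_sqrt] <;> norm_num

lemma sqrt_three_lt_two : √3 < 2 := by
  rw [sqrt_lt'] <;> norm_num

lemma x0_pos (hε : 0 < ε) : 0 < x0 ε := mul_pos (sub_pos.2 sqrt_three_lt_two) hε

lemma x0_lt_self (hε : 0 < ε) : x0 ε < ε := by
  rw [x0]; nlinarith [one_lt_sqrt_three]

lemma phi2Left_eq_neg_mul (hε : 0 < ε) :
    phi2Left ε x = -((x - x0 ε) * (4 * ε - x0 ε - x) / (12 * ε ^ 2)) := by
  have h3 : √3 ^ 2 = 3 := sq_sqrt (by norm_num)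
  rw [phi2Left, x0]
  field_simp
  linear_combination ε ^ 2 * h3

lemma phi2Left_self (hε : 0 < ε) : phi2Left ε ε = -(1 / 6) := by
  rw [phi2Left, div_self hε.ne']
  norm_num

lemma phi2Left_neg (hε : 0 < ε) (hx : x ∈ Ioc (x0 ε) ε) : phi2Left ε x < 0 := by
  have h₁ : 0 < x - x0 ε := sub_pos.2 hx.1
  have h₂ : 0 < 4 * ε - x0 ε - x := by linarith [x0_lt_self hε, hx.2]
  rw [phi2Left_eq_neg_mul hε, neg_lt_zero]
  positivity

lemma phi1Left_self (hε : 0 < ε) : phi1Left ε ε = 0 := by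
  rw [phi1Left, div_self hε.ne', sub_self, mul_zero, zero_mul]

lemma phi1Left_nonpos (hε : 0 < ε) (hx : x ∈ Icc 0 ε) : phi1Left ε x ≤ 0 := by
  have h₁ : 0 ≤ 1 - x / ε := sub_nonneg.2 ((div_le_one hε).2 hx.2)
  have h₂ : 0 ≤ x := hx.1
  rw [phi1Left, neg_mul, neg_mul, neg_nonpos]
  positivity

lemma gfun_eq_exp_gLog (hε : 0 < ε) (hx : x ∈ Ioo (x0 ε) (4 * ε - x0 ε)) :
    gfun ε x = exp (gLog ε x) := by
  have h₁ : 0 < x - x0 ε := sub_pos.2 hx.1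
  have h₂ : 0 < 4 * ε - x0 ε - x := sub_pos.2 hx.2
  have h₃ : 0 < x + ε := by linarith [x0_pos hε, hx.1]
  rw [gfun, show x - 4 * ε + x0 ε = -(4 * ε - x0 ε - x) by ring, abs_neg, Real.sign_of_pos h₁,
    abs_of_pos h₁, abs_of_pos h₂, rpow_def_of_pos h₁, rpow_def_of_pos h₂, rpow_def_of_pos h₃,
    one_mul, ← exp_add, ← exp_add, ← exp_add, gLog]
  congr 1
  ring

lemma gfun_pos (hε : 0 < ε) (hx : x ∈ Ioc (x0 ε) ε) : 0 < gfun ε x := by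
  rw [gfun_eq_exp_gLog hε ⟨hx.1, by linarith [x0_lt_self hε, hx.2]⟩]
  exact exp_pos _

lemma phi1Left_div_phi2Left (hε : 0 < ε) (h₁ : x - x0 ε ≠ 0) (h₂ : 4 * ε - x0 ε - x ≠ 0)
    (h₃ : x + ε ≠ 0) : phi1Left ε x / phi2Left ε x =
      (4 + 2 * √3) * ε / (x - x0 ε) - (4 - 2 * √3) * ε / (4 * ε - x0 ε - x) - 8 * ε / (x + ε) -
        24 * ε ^ 3 / (x + ε) ^ 3 - 12 * ε ^ 2 / (x + ε) ^ 2 := by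
  have h3 : √3 ^ 2 = 3 := sq_sqrt (by norm_num)
  have hprod : (x - x0 ε) * (4 * ε - x0 ε - x) = -(x ^ 2 - 4 * ε * x + ε ^ 2) := by
    rw [x0]; linear_combination ε ^ 2 * h3
  have hnum : (4 + 2 * √3) * (4 * ε - x0 ε - x) - (4 - 2 * √3) * (x - x0 ε) = 28 * ε - 8 * x := by
    rw [x0]; linear_combination 4 * ε * h3
  have h₃' : 1 + x / ε = (x + ε) / ε := by field_simp; ring
  rw [phi2Left_eq_neg_mul hε, phi1Left, h₃']
  generalize x - x0 ε = A at *
  generalize 4 * ε - x0 ε - x = B at *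
  field_simp
  linear_combination -(x + ε) ^ 3 * hnum + (8 * (x+ε) ^ 2 + 24 * ε ^ 2 + 12 * ε * (x+ε)) * hprod

lemma hasDerivAt_gLog (hε : 0 < ε) (hx : x ∈ Ioo (x0 ε) (4 * ε - x0 ε)) :
    HasDerivAt (gLog ε) (phi1Left ε x / phi2Left ε x) x := by
  have h₁ : x - x0 ε ≠ 0 := (sub_pos.2 hx.1).ne'
  have h₂ : 4 * ε - x0 ε - x ≠ 0 := (sub_pos.2 hx.2).ne'
  have h₃ : x + ε ≠ 0 := by linarith [x0_pos hε, hx.1]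
  have h₃' : ε + x ≠ 0 := add_comm x ε ▸ h₃
  have hlog₁ := (((hasDerivAt_id x).sub_const (x0 ε)).log h₁).const_mul ((4 + 2 * √3) * ε)
  have hlog₂ := (((hasDerivAt_id x).const_sub (4 * ε - x0 ε)).log h₂).const_mul ((4 - 2 * √3) * ε)
  have hlog₃ := (((hasDerivAt_id x).add_const ε).log h₃).const_mul (8 * ε)
  have hfrac₁ := (hasDerivAt_const x (12 * ε ^ 3)).fun_div
    (((hasDerivAt_id x).const_add ε).fun_pow 2) (pow_ne_zero 2 h₃')
  have hfrac₂ := (hasDerivAt_const x (12 * ε ^ 2)).fun_div ((hasDerivAt_id x).const_add ε) h₃'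
  refine (((hlog₁.add hlog₂).sub hlog₃).add (hfrac₁.add hfrac₂)).congr_deriv ?_
  rw [phi1Left_div_phi2Left hε h₁ h₂ h₃]
  simp only [id_eq]
  field_simp
  ring

lemma hasDerivAt_pLeft (hε : 0 < ε) (hx : x ∈ Ioc (x0 ε) ε) :
    HasDerivAt (pLeft ε) (pLeft ε x * phi1Left ε x / phi2Left ε x) x := by
  have hx' : x ∈ Ioo (x0 ε) (4 * ε - x0 ε) := ⟨hx.1, by linarith [x0_lt_self hε, hx.2]⟩
  have hexp : gfun ε =ᶠ[𝓝 x] fun z => exp (gLog ε z) :=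
    eventually_of_mem (isOpen_Ioo.mem_nhds hx') fun z hz => gfun_eq_exp_gLog hε hz
  have hg := (hasDerivAt_gLog hε hx').exp.congr_of_eventuallyEq hexp
  refine (hg.div_const (6 * gfun ε ε)).congr_deriv ?_
  rw [pLeft, gfun_eq_exp_gLog hε hx']
  ring

lemma pLeft_pos (hε : 0 < ε) (hx : x ∈ Ioc (x0 ε) ε) : 0 < pLeft ε x :=
  div_pos (gfun_pos hε hx) (mul_pos (by norm_num) (gfun_pos hε (right_mem_Ioc.2 (x0_lt_self hε))))

lemma pLeft_self (hε : 0 < ε) : pLeft ε ε = 1 / 6 := by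
  have hg := (gfun_pos hε (right_mem_Ioc.2 (x0_lt_self hε))).ne'
  rw [pLeft]
  field_simp

lemma monotoneOn_pLeft (hε : 0 < ε) : MonotoneOn (pLeft ε) (Ioc (x0 ε) ε) := by
  refine monotoneOn_of_hasDerivWithinAt_nonneg (convex_Ioc _ _)
    (HasDerivAt.continuousOn fun x hx => hasDerivAt_pLeft hε hx)
    (fun x hx => (hasDerivAt_pLeft hε (interior_subset hx)).hasDerivWithinAt) fun x hx => ?_
  have hx' := interior_subset hx
  rw [mul_div_assoc]
  exact mul_nonneg (pLeft_pos hε hx').le (div_nonneg_of_nonpos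
    (phi1Left_nonpos hε ⟨((x0_pos hε).trans hx'.1).le, hx'.2⟩) (phi2Left_neg hε hx').le)

lemma tendsto_pLeft (hε : 0 < ε) : Tendsto (pLeft ε) (𝓝[>] (x0 ε)) (𝓝 0) := by
  have hexp : 0 < (4 + 2 * √3) * ε := by positivity
  have h₂ : |x0 ε - 4 * ε + x0 ε| ≠ 0 := abs_ne_zero.2 (by linarith [x0_lt_self hε])
  have h₃ : x0 ε + ε ≠ 0 := by linarith [x0_pos hε]
  have h₃' : ε + x0 ε ≠ 0 := add_comm ε (x0 ε) ▸ h₃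
  have hcont : ContinuousAt (fun x => |x - x0 ε| ^ ((4 + 2 * √3) * ε) *
      |x - 4 * ε + x0 ε| ^ ((4 - 2 * √3) * ε) * (x + ε) ^ (-(8 * ε)) *
      exp (12 * ε ^ 3 / (ε+x) ^ 2 + 12 * ε ^ 2 / (ε+x)) / (6 * gfun ε ε)) (x0 ε) := by
    refine ContinuousAt.div_const (((ContinuousAt.mul ?_ ?_).mul ?_).mul ?_) _
    · exact ContinuousAt.rpow_const (by fun_prop) (.inr hexp.le)
    · exact ContinuousAt.rpow_const (by fun_prop) (.inl h₂)
    · exact ContinuousAt.rpow_const (by fun_prop) (.inl h₃)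
    · fun_prop (disch := positivity)
  have hlim := hcont.continuousWithinAt (s := Ioi (x0 ε)).tendsto
  rw [sub_self, abs_zero, zero_rpow hexp.ne', zero_mul, zero_mul, zero_mul, zero_div] at hlim
  refine hlim.congr' (eventually_of_mem self_mem_nhdsWithin fun x hx => ?_)
  refine congrArg (· / (6 * gfun ε ε)) ?_
  rw [gfun, Real.sign_of_pos (sub_pos.2 hx), one_mul]

-- The branches of `phi2`, `phi1` and `pfun` agree at `ε` and at `1 - ε`, so each of these functions
-- is a combination of its left branch at `min x ε` and at `min (1 - x) ε`.
lemma ite_eq_add_min {F G : ℝ → ℝ} {k : ℝ} (hε : ε < 1 / 2) (hF : F ε = k) (hG : G ε = k) :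
    (if x ≤ ε then F x else if x ≤ 1 - ε then k else G (1 - x)) =
      F (min x ε) + G (min (1 - x) ε) - k := by
  split_ifs with h₁ h₂
  · rw [min_eq_left h₁, min_eq_right (by linarith), hG, add_sub_cancel_right]
  · rw [min_eq_right (not_le.1 h₁).le, min_eq_right (by linarith), hF, hG, add_sub_cancel_right]
  · rw [min_eq_right (not_le.1 h₁).le, min_eq_left (by linarith), hF, add_sub_cancel_left]

lemma phi2_eq_add_min (hε : 0 < ε) (hε' : ε < 1 / 2) :
    phi2 ε x = phi2Left ε (min x ε) + phi2Left ε (min (1 - x) ε) + 1 / 6 := by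
  have hself := phi2Left_self hε
  rw [← sub_neg_eq_add, ← ite_eq_add_min hε' hself hself]
  rfl

lemma phi1_eq_sub_min (hε : 0 < ε) (hε' : ε < 1 / 2) :
    phi1 ε x = phi1Left ε (min x ε) - phi1Left ε (min (1 - x) ε) := by
  have hself := phi1Left_self hε
  rw [← sub_zero (_ - _), sub_eq_add_neg (phi1Left ε _),
    ← ite_eq_add_min (G := fun x => -phi1Left ε x) hε' hself (neg_eq_zero.2 hself)]
  simp only [phi1, phi1Left, neg_mul, neg_neg]

lemma pfun_eq_add_min (hε : 0 < ε) (hε' : ε < 1 / 2) :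
    pfun ε x = pLeft ε (min x ε) + pLeft ε (min (1 - x) ε) - 1 / 6 := by
  rw [← ite_eq_add_min hε' (pLeft_self hε) (pLeft_self hε)]
  rfl

lemma phi2_one_sub (hε : 0 < ε) (hε' : ε < 1 / 2) (x : ℝ) : phi2 ε (1 - x) = phi2 ε x := by
  rw [phi2_eq_add_min hε hε', phi2_eq_add_min hε hε', sub_sub_cancel, add_comm (phi2Left _ _)]

lemma phi1_one_sub (hε : 0 < ε) (hε' : ε < 1 / 2) (x : ℝ) : phi1 ε (1 - x) = -phi1 ε x := by
  rw [phi1_eq_sub_min hε hε', phi1_eq_sub_min hε hε', sub_sub_cancel, neg_sub]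

lemma pfun_one_sub (hε : 0 < ε) (hε' : ε < 1 / 2) (x : ℝ) : pfun ε (1 - x) = pfun ε x := by
  rw [pfun_eq_add_min hε hε', pfun_eq_add_min hε hε', sub_sub_cancel, add_comm (pLeft _ _)]

lemma continuous_phi2 (hε : 0 < ε) (hε' : ε < 1 / 2) : Continuous (phi2 ε) := by
  have hleft : Continuous (phi2Left ε) := by unfold phi2Left; fun_prop
  rw [show phi2 ε = _ from funext fun x => phi2_eq_add_min hε hε']
  fun_prop

lemma continuousOn_phi1 (hε : 0 < ε) (hε' : ε < 1 / 2) :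
    ContinuousOn (phi1 ε) (Ioo (x0 ε) (1 - x0 ε)) := by
  have hleft : ContinuousOn (phi1Left ε) (Ioi 0) := fun x hx => by
    have hden : (1 + x / ε) ^ 3 ≠ 0 := by have hx₀ : 0 < x := hx; positivity
    unfold phi1Left
    exact ContinuousAt.continuousWithinAt (by fun_prop (disch := exact hden))
  have hx0 := x0_pos hε
  rw [show phi1 ε = _ from funext fun x => phi1_eq_sub_min hε hε']
  refine (hleft.comp (by fun_prop) fun x hx => ?_).sub (hleft.comp (by fun_prop) fun x hx => ?_)
  · exact lt_min (hx0.trans hx.1) hε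
  · exact lt_min (by linarith [hx.2]) hε

lemma min_mem_Ioc_x0 (hε : 0 < ε) (hx : x0 ε < x) : min x ε ∈ Ioc (x0 ε) ε :=
  ⟨lt_min hx (x0_lt_self hε), min_le_right x ε⟩

lemma phi2_eq_phi2Left_min (hε : 0 < ε) (hε' : ε < 1 / 2) (hx : x ≤ 1 - ε) :
    phi2 ε x = phi2Left ε (min x ε) := by
  rw [phi2_eq_add_min hε hε', min_eq_right (le_sub_comm.1 hx), phi2Left_self hε,
    neg_add_cancel_right]

lemma phi1_eq_phi1Left_min (hε : 0 < ε) (hε' : ε < 1 / 2) (hx : x ≤ 1 - ε) :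
    phi1 ε x = phi1Left ε (min x ε) := by
  rw [phi1_eq_sub_min hε hε', min_eq_right (le_sub_comm.1 hx), phi1Left_self hε, sub_zero]

lemma pfun_eq_pLeft_min (hε : 0 < ε) (hε' : ε < 1 / 2) (hx : x ≤ 1 - ε) :
    pfun ε x = pLeft ε (min x ε) := by
  rw [pfun_eq_add_min hε hε', min_eq_right (le_sub_comm.1 hx), pLeft_self hε, add_sub_cancel_right]

lemma hasDerivAt_comp_min {F : ℝ → ℝ} {F' c : ℝ} (hF : HasDerivAt F F' (min x c))
    (hF' : c ≤ x → F' = 0) : HasDerivAt (fun z => F (min z c)) F' x := by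
  rcases lt_or_ge x c with hx | hx
  · rw [min_eq_left hx.le] at hF
    refine hF.congr_of_eventuallyEq ((eventually_lt_nhds hx).mono fun z hz => ?_)
    exact congrArg F (min_eq_left hz.le)
  · rw [hF' hx, hasDerivAt_iff_isLittleO] at hF ⊢
    simp only [smul_zero, sub_zero] at hF ⊢
    have hmin : Tendsto (fun z => min z c) (𝓝 x) (𝓝 (min x c)) :=
      (continuous_id.min continuous_const).tendsto x
    refine (hF.comp_tendsto hmin).trans_isBigO (.of_bound 1 (.of_forall fun z => ?_))
    rw [one_mul]
    exact abs_inf_sub_inf_le_abs z x c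

lemma isIntegratingFactorAt_pfun_of_lt (hε : 0 < ε) (hε' : ε < 1 / 2) (hx : x0 ε < x)
    (hx' : x < 1 - ε) : IsIntegratingFactorAt (pfun ε) (phi2 ε) (phi1 ε) x := by
  have hmin := min_mem_Ioc_x0 hε hx
  have hderiv := hasDerivAt_comp_min (hasDerivAt_pLeft hε hmin) fun h => by
    rw [min_eq_right h, phi1Left_self hε, mul_zero, zero_div]
  have hpfun : pfun ε =ᶠ[𝓝 x] fun z => pLeft ε (min z ε) :=
    (eventually_lt_nhds hx').mono fun z hz => pfun_eq_pLeft_min hε hε' hz.le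
  rw [IsIntegratingFactorAt, pfun_eq_pLeft_min hε hε' hx'.le, phi2_eq_phi2Left_min hε hε' hx'.le,
    phi1_eq_phi1Left_min hε hε' hx'.le]
  exact ⟨(pLeft_pos hε hmin).ne', (phi2Left_neg hε hmin).ne,
    hderiv.congr_of_eventuallyEq hpfun⟩

lemma isIntegratingFactorAt_pfun (hε : 0 < ε) (hε' : ε < 1 / 2)
    (hx : x ∈ Ioo (x0 ε) (1 - x0 ε)) :
    IsIntegratingFactorAt (pfun ε) (phi2 ε) (phi1 ε) x := by
  rcases lt_or_ge x (1 - ε) with h | h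
  · exact isIntegratingFactorAt_pfun_of_lt hε hε' hx.1 h
  · exact (isIntegratingFactorAt_pfun_of_lt hε hε' (by linarith [hx.2])
      (by linarith)).comp_const_sub (pfun_one_sub hε hε') (phi2_one_sub hε hε')
        (phi1_one_sub hε hε')

lemma phi2Left_x0_add (hε : 0 < ε) (s : ℝ) :
    phi2Left ε (x0 ε + ε * s) = s * (s - 2 * √3) / 12 := by
  rw [phi2Left_eq_neg_mul hε, x0]
  field_simp
  ring

lemma phi2_eq_phi2Left (hx : x ≤ ε) : phi2 ε x = phi2Left ε x := if_pos hx

lemma phi1_eq_phi1Left (hx : x ≤ ε) : phi1 ε x = phi1Left ε x := if_pos hx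

lemma eqOn_pfun_pLeft : EqOn (pfun ε) (pLeft ε) (Iic ε) := fun _ hx => if_pos hx

end Coefficients

section Extension

open PowerSeries

variable {ε lam x : ℝ} {u u' : ℝ → ℝ}

/-- With `s = (x - x0 ε) / ε`, the equation `D_ε f = lam f` near `x0 ε` is
`s Y'' + q(s) Y' = ρ(s) Y`, where `q(s) = 12 ε φ₁ / (s - 2√3)` is this power series. -/
noncomputable def frobeniusQ (ε : ℝ) : ℝ⟦X⟧ :=
  C (36 * ε / (√3 * (3 - √3) ^ 3)) * (C (√3 - 1) + C (-1 : ℝ) * X) *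
    (geomSeries (√3 - 3)⁻¹ ^ 3 * geomSeries (2 * √3)⁻¹)

/-- The coefficient `ρ(s) = 12 ε² lam / (s - 2√3)` of the equation described at `frobeniusQ`. -/
noncomputable def frobeniusRho (ε lam : ℝ) : ℝ⟦X⟧ :=
  C (-(6 * ε ^ 2 * lam / √3)) * geomSeries (2 * √3)⁻¹

lemma one_le_norm_two_mul_sqrt_three : 1 ≤ ‖2 * √3‖ := by
  rw [norm_of_nonneg (by positivity)]
  linarith [one_lt_sqrt_three]

lemma one_le_norm_sqrt_three_sub_three : 1 ≤ ‖√3 - 3‖ := by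
  rw [norm_of_nonpos (by linarith [sqrt_three_lt_two])]
  linarith [sqrt_three_lt_two]

lemma convergesOnDisc_frobeniusQ : ConvergesOnDisc (frobeniusQ ε) 1 :=
  ((ConvergesOnDisc.C _ 1).mul (.C_add_C_mul_X _ _ 1)).mul
    ((ConvergesOnDisc.geomSeries_inv one_le_norm_sqrt_three_sub_three).pow 3 |>.mul
      (.geomSeries_inv one_le_norm_two_mul_sqrt_three))

lemma convergesOnDisc_frobeniusRho : ConvergesOnDisc (frobeniusRho ε lam) 1 :=
  (ConvergesOnDisc.C _ 1).mul (.geomSeries_inv one_le_norm_two_mul_sqrt_three)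

lemma constantCoeff_frobeniusQ_pos (hε : 0 < ε) : 0 < constantCoeff (frobeniusQ ε) := by
  have h₁ : 0 < √3 - 1 := sub_pos.2 one_lt_sqrt_three
  have h₂ : 0 < 3 - √3 := by linarith [sqrt_three_lt_two]
  have hgeom (a : ℝ) : constantCoeff (geomSeries a) = 1 := by
    rw [← coeff_zero_eq_constantCoeff_apply, geomSeries, coeff_mk, pow_zero]
  simp only [frobeniusQ, map_mul, map_add, map_pow, hgeom, constantCoeff_C, constantCoeff_X]
  rw [mul_zero, add_zero, one_pow, mul_one, mul_one]
  positivity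

lemma sumAt_frobeniusRho {s : ℝ} (hs : ‖s‖ < 1) :
    sumAt (frobeniusRho ε lam) s = 12 * ε ^ 2 * lam / (s - 2 * √3) := by
  have hgeom := sumAt_geomSeries_inv (hs.trans_le one_le_norm_two_mul_sqrt_three)
  rw [frobeniusRho, (ConvergesOnDisc.C _ 1).sumAt_mul
    (.geomSeries_inv one_le_norm_two_mul_sqrt_three) hs, sumAt_C, hgeom, ← neg_sub s, div_neg]
  field_simp
  ring

lemma sumAt_frobeniusQ (hε : 0 < ε) {s : ℝ} (hs : ‖s‖ < 1) :
    sumAt (frobeniusQ ε) s = 12 * ε * phi1Left ε (x0 ε + ε * s) / (s - 2 * √3) := by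
  have hs' : -1 < s := neg_lt_of_abs_lt hs
  have hτ : 3 - √3 ≠ 0 := by linarith [sqrt_three_lt_two]
  have hτs : 3 - √3 + s ≠ 0 := by linarith [sqrt_three_lt_two]
  have harg : (x0 ε + ε * s) / ε = 2 - √3 + s := by rw [x0]; field_simp
  have hconv₁ := ConvergesOnDisc.geomSeries_inv one_le_norm_sqrt_three_sub_three
  have hconv₂ := ConvergesOnDisc.geomSeries_inv one_le_norm_two_mul_sqrt_three
  rw [frobeniusQ, ((ConvergesOnDisc.C _ 1).mul (.C_add_C_mul_X _ _ 1)).sumAt_mul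
    ((hconv₁.pow 3).mul hconv₂) hs, (ConvergesOnDisc.C _ 1).sumAt_mul (.C_add_C_mul_X _ _ 1) hs,
    (hconv₁.pow 3).sumAt_mul hconv₂ hs, hconv₁.sumAt_pow hs, sumAt_C, sumAt_C_add_C_mul_X,
    sumAt_geomSeries_inv (hs.trans_le one_le_norm_sqrt_three_sub_three),
    sumAt_geomSeries_inv (hs.trans_le one_le_norm_two_mul_sqrt_three), phi1Left, harg,
    show √3 - 3 - s = -(3 - √3 + s) by ring, ← neg_sub 3 (√3), neg_div_neg_eq, ← neg_sub s,
    div_neg, show 1 + (2 - √3 + s) = 3 - √3 + s by ring]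
  field_simp
  ring

lemma exists_isEigenAt_near_x0 (hε : 0 < ε) (lam : ℝ) : ∃ y : ℝ → ℝ, y (x0 ε) ≠ 0 ∧
    ∀ x ∈ Ico 0 ε, IsEigenAt (phi2 ε) (phi1 ε) lam y x := by
  have hden (n : ℕ) : n + constantCoeff (frobeniusQ ε) ≠ 0 :=
    (add_pos_of_nonneg_of_pos n.cast_nonneg (constantCoeff_frobeniusQ_pos hε)).ne'
  obtain ⟨Y, Y', Y'', hY₀, hY⟩ := exists_hasDerivAt_of_regular_singular
    convergesOnDisc_frobeniusQ (convergesOnDisc_frobeniusRho (ε := ε) (lam := lam)) hden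
  let σ : ℝ → ℝ := fun x => (x - x0 ε) / ε
  have hσ (x : ℝ) : HasDerivAt σ (1 / ε) x := ((hasDerivAt_id x).sub_const (x0 ε)).div_const ε
  have hnorm : ∀ x ∈ Metric.ball (x0 ε) ε, ‖σ x‖ < 1 := fun x hx => by
    rw [norm_div, norm_of_nonneg hε.le, div_lt_one hε]
    exact mem_ball_iff_norm.1 hx
  refine ⟨fun x => Y (σ x), by simp [σ, hY₀], fun x hx => ?_⟩
  have hx0 := x0_pos hε
  have hxU : x ∈ Metric.ball (x0 ε) ε := by
    rw [Real.ball_eq_Ioo]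
    exact ⟨by linarith [hx.1, x0_lt_self hε], by linarith [hx.2]⟩
  refine isEigenAt_of_hasDerivAt Metric.isOpen_ball
    (fun z hz => (hY (σ z) (hnorm z hz)).1.comp z (hσ z))
    (fun z hz => ((hY (σ z) (hnorm z hz)).2.1.comp z (hσ z)).mul_const (1 / ε))
    (fun z hz => ?_) hxU ?_
  · exact ((((hY (σ z) (hnorm z hz)).2.2.1.comp (hσ z).continuousAt).mul_const _).mul_const
      _).continuousWithinAt
  · have hs := hnorm x hxU
    have hode := (hY (σ x) hs).2.2.2
    have hargs : x0 ε + ε * σ x = x := by simp only [σ]; field_simp; ring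
    have hden : σ x - 2 * √3 ≠ 0 := by
      linarith [(le_abs_self (σ x)).trans_lt hs, one_lt_sqrt_three]
    rw [sumAt_frobeniusQ hε hs, sumAt_frobeniusRho hs, hargs] at hode
    rw [phi2_eq_phi2Left hx.2.le, phi1_eq_phi1Left hx.2.le, ← hargs, phi2Left_x0_add hε, hargs]
    field_simp at hode ⊢
    linear_combination hode

lemma tendsto_flux_one_sub (hε : 0 < ε) (hε' : ε < 1 / 2)
    (hright : Tendsto (fun x => pfun ε x * u' x) (𝓝[<] (1 - x0 ε)) (𝓝 0)) :
    Tendsto (fun x => pfun ε x * -u' (1 - x)) (𝓝[>] (x0 ε)) (𝓝 0) := by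
  have hmaps : MapsTo (1 - ·) (Ioi (x0 ε)) (Iio (1 - x0 ε)) := fun x hx =>
    show 1 - x < 1 - x0 ε from sub_lt_sub_left hx 1
  have h := (hright.comp (tendsto_const_sub_nhdsWithin hmaps)).neg
  simpa only [Function.comp_def, pfun_one_sub hε hε', neg_zero, ← mul_neg] using h

namespace IsSLSol

lemma isSturmLiouvilleAt (hu : IsSLSol ε lam u u') (hx : x ∈ Ioo (x0 ε) (1 - x0 ε)) :
    IsSturmLiouvilleAt (pfun ε) (phi2 ε) lam u u' x := hu x hx

lemma isEigenAt (hε : 0 < ε) (hε' : ε < 1 / 2) (hu : IsSLSol ε lam u u')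
    (hx : x ∈ Ioo (x0 ε) (1 - x0 ε)) : IsEigenAt (phi2 ε) (phi1 ε) lam u x :=
  IsSturmLiouvilleAt.isEigenAt isOpen_Ioo (continuous_phi2 hε hε').continuousOn
    (continuousOn_phi1 hε hε') (fun _ => isIntegratingFactorAt_pfun hε hε')
    (fun _ => hu.isSturmLiouvilleAt) hx

lemma reflect (hε : 0 < ε) (hε' : ε < 1 / 2) (hu : IsSLSol ε lam u u') :
    IsSLSol ε lam (fun x => u (1 - x)) (fun x => -u' (1 - x)) := by
  intro x hx
  obtain ⟨hderiv, hflux⟩ := hu (1 - x) ⟨by linarith [hx.2], by linarith [hx.1]⟩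
  refine ⟨hderiv.comp_const_sub 1 x, ?_⟩
  have h := (hflux.comp_const_sub 1 x).neg
  simp only [wfun, pfun_one_sub hε hε', phi2_one_sub hε hε', neg_neg] at h ⊢
  exact h.congr_of_eventuallyEq (.of_forall fun z => mul_neg _ _)

lemma exists_extension_left (hε : 0 < ε) (hε' : ε < 1 / 2) (hu : IsSLSol ε lam u u')
    (hflux : Tendsto (fun x => pfun ε x * u' x) (𝓝[>] (x0 ε)) (𝓝 0)) :
    ∃ v, EqOn v u (Ioi (x0 ε)) ∧
      ∀ x ∈ Ico 0 (1 - x0 ε), IsEigenAt (phi2 ε) (phi1 ε) lam v x := by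
  obtain ⟨y, hy₀, hy⟩ := exists_isEigenAt_near_x0 hε lam
  have hx0 := x0_pos hε
  have hsub : Ioo (x0 ε) ε ⊆ Ioo (x0 ε) (1 - x0 ε) :=
    Ioo_subset_Ioo_right (by linarith [x0_lt_self hε])
  have hpfun : EqOn (pfun ε) (pLeft ε) (Ioo (x0 ε) ε) :=
    eqOn_pfun_pLeft.mono fun x hx => hx.2.le
  obtain ⟨k, d, hd, hk⟩ := exists_eqOn_const_mul_of_tendsto_flux (x0_lt_self hε)
    (fun x hx => hpfun hx ▸ pLeft_pos hε (Ioo_subset_Ioc_self hx))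
    (((monotoneOn_pLeft hε).mono Ioo_subset_Ioc_self).congr hpfun.symm)
    ((tendsto_pLeft hε).congr' (hpfun.symm.eventuallyEq_of_mem (Ioo_mem_nhdsGT (x0_lt_self hε))))
    (fun x hx => isIntegratingFactorAt_pfun hε hε' (hsub hx))
    (fun x hx => hu.isSturmLiouvilleAt (hsub hx)) hflux
    (fun x hx => hy x ⟨hx0.le.trans hx.1, hx.2⟩) hy₀
  refine ⟨fun x => if x0 ε < x then u x else k * y x, fun x hx => if_pos hx, fun x hx => ?_⟩
  rcases lt_or_ge (x0 ε) x with h | h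
  · exact (hu.isEigenAt hε hε' ⟨h, hx.2⟩).congr
      (eventually_of_mem (Ioi_mem_nhds h) fun z hz => if_pos hz)
  · refine ((hy x ⟨hx.1, h.trans_lt (x0_lt_self hε)⟩).const_mul k).congr
      (eventually_of_mem (Iio_mem_nhds (h.trans_lt hd.1)) fun z hz => ?_)
    exact ite_eq_right_iff.2 fun hz' => hk ⟨hz', hz⟩

lemma exists_extension (hε : 0 < ε) (hε' : ε < 1 / 2) (hu : IsSLSol ε lam u u')
    (hleft : Tendsto (fun x => pfun ε x * u' x) (𝓝[>] (x0 ε)) (𝓝 0))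
    (hright : Tendsto (fun x => pfun ε x * u' x) (𝓝[<] (1 - x0 ε)) (𝓝 0)) :
    ∃ v, EqOn v u (Ioo (x0 ε) (1 - x0 ε)) ∧
      ∀ x ∈ Icc 0 1, IsEigenAt (phi2 ε) (phi1 ε) lam v x := by
  have hx0 := x0_lt_self hε
  obtain ⟨v, hv, hveigen⟩ := hu.exists_extension_left hε hε' hleft
  obtain ⟨w, hw, hweigen⟩ := (hu.reflect hε hε').exists_extension_left hε hε'
    (tendsto_flux_one_sub hε hε' hright)
  let V : ℝ → ℝ := fun x => if x < 1 - x0 ε then v x else w (1 - x)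
  have hVv : EqOn V v (Iio (1 - x0 ε)) := fun x hx => if_pos hx
  have hVw : EqOn V (fun x => w (1 - x)) (Ioi (x0 ε)) := fun x hx => by
    refine ite_eq_right_iff.2 fun hx' => ?_
    simp only [hv hx, hw (lt_sub_comm.1 hx'), sub_sub_cancel]
  refine ⟨V, fun x hx => (hVv hx.2).trans (hv hx.1), fun x hx => ?_⟩
  rcases lt_or_ge x (1 - x0 ε) with h | h
  · exact (hveigen x ⟨hx.1, h⟩).congr (hVv.eventuallyEq_of_mem (Iio_mem_nhds h))
  · have hx0' : x0 ε < x := by linarith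
    refine IsEigenAt.congr ?_ (hVw.eventuallyEq_of_mem (Ioi_mem_nhds hx0'))
    exact IsEigenAt.comp_const_sub (phi2_one_sub hε hε') (phi1_one_sub hε hε')
      (hweigen (1 - x) ⟨sub_nonneg.2 hx.2, by linarith⟩)

end IsSLSol

lemma tendsto_pfun_left (hε : 0 < ε) : Tendsto (pfun ε) (𝓝[>] (x0 ε)) (𝓝 0) :=
  (tendsto_pLeft hε).congr' (eqOn_pfun_pLeft.symm.eventuallyEq_of_mem
    (nhdsWithin_le_nhds (Iic_mem_nhds (x0_lt_self hε))))

lemma tendsto_pfun_right (hε : 0 < ε) (hε' : ε < 1 / 2) :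
    Tendsto (pfun ε) (𝓝[<] (1 - x0 ε)) (𝓝 0) := by
  have hmaps : MapsTo (1 - ·) (Iio (1 - x0 ε)) (Ioi (x0 ε)) := fun x hx =>
    show x0 ε < 1 - x from lt_sub_comm.1 hx
  have hreflect := tendsto_const_sub_nhdsWithin (x := 1 - x0 ε) hmaps
  rw [sub_sub_cancel] at hreflect
  simpa only [Function.comp_def, pfun_one_sub hε hε'] using (tendsto_pfun_left hε).comp hreflect

end Extension

theorem stmt7_general {ε lam : ℝ} (hε : 0 < ε) (hε' : ε < 1 / 2) {u u' : ℝ → ℝ}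
    (hu : IsSLSol ε lam u u') :
    (Tendsto (fun x => pfun ε x * u' x) (𝓝[>] (x0 ε)) (𝓝 0) ∧
      Tendsto (fun x => pfun ε x * u' x) (𝓝[<] (1 - x0 ε)) (𝓝 0)) ↔
      ∃ v v' v'' : ℝ → ℝ,
        (∀ x ∈ Icc (0:ℝ) 1, HasDerivAt v (v' x) x) ∧
        (∀ x ∈ Icc (0:ℝ) 1, HasDerivAt v' (v'' x) x) ∧
        ContinuousOn v'' (Icc 0 1) ∧
        (∀ x ∈ Ioo (x0 ε) (1 - x0 ε), v x = u x) ∧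
        (∀ x ∈ Icc (0:ℝ) 1, phi2 ε x * v'' x + phi1 ε x * v' x = lam * v x) := by
  have hx0 := x0_pos hε
  have hx0' := x0_lt_self hε
  constructor
  · rintro ⟨hleft, hright⟩
    obtain ⟨v, hvu, hv⟩ := hu.exists_extension hε hε' hleft hright
    exact ⟨v, deriv v, deriv (deriv v), fun x hx => (hv x hx).hasDerivAt,
      fun x hx => (hv x hx).hasDerivAt_deriv,
      fun x hx => (hv x hx).continuousAt_deriv_deriv.continuousWithinAt, hvu,
      fun x hx => (hv x hx).2⟩
  · rintro ⟨v, v', v'', hv, hv', -, hvu, -⟩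
    have hderiv : EqOn u' v' (Ioo (x0 ε) (1 - x0 ε)) :=
      eqOn_of_hasDerivAt isOpen_Ioo (fun x hx => (hu x hx).1)
        (fun x hx => hv x ⟨(hx0.trans hx.1).le, by linarith [hx.2]⟩) fun x hx => (hvu x hx).symm
    exact ⟨tendsto_mul_zero_of_eqOn nhdsWithin_le_nhds (tendsto_pfun_left hε)
        (Ioo_mem_nhdsGT (by linarith)) hderiv (hv' _ ⟨hx0.le, by linarith⟩).continuousAt,
      tendsto_mul_zero_of_eqOn nhdsWithin_le_nhds (tendsto_pfun_right hε hε')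
        (Ioo_mem_nhdsLT (by linarith)) hderiv (hv' _ ⟨by linarith, by linarith⟩).continuousAt⟩

theorem stmt7 :
    ∃ ε₀ > (0:ℝ), ∀ ε : ℝ, 0 < ε → ε ≤ ε₀ → ∀ lam : ℝ, ∀ u u' : ℝ → ℝ,
      IsSLSol ε lam u u' →
      ((Tendsto (fun x => pfun ε x * u' x) (𝓝[>] (x0 ε)) (𝓝 0) ∧
        Tendsto (fun x => pfun ε x * u' x) (𝓝[<] (1 - x0 ε)) (𝓝 0)) ↔
        ∃ v v' v'' : ℝ → ℝ,
          (∀ x ∈ Icc (0:ℝ) 1, HasDerivAt v (v' x) x) ∧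
          (∀ x ∈ Icc (0:ℝ) 1, HasDerivAt v' (v'' x) x) ∧
          ContinuousOn v'' (Icc 0 1) ∧
          (∀ x ∈ Ioo (x0 ε) (1 - x0 ε), v x = u x) ∧
          (∀ x ∈ Icc (0:ℝ) 1, phi2 ε x * v'' x + phi1 ε x * v' x = lam * v x)) :=
  ⟨1/4, by norm_num, fun _ hε hε' _ _ _ hu => stmt7_general hε (by linarith) hu⟩
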